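/- Let n > 2 be odd and let λ : D_n → ℝ. Then Σ_{g ∈ D_n} λ(g)·M(g) is the zero matrix if and only if there exists c ∈ ℝ such that λ(g) = c for every rotation g = r^k and λ(g) = −c for every reflection g = f r^k. (Equivalently, the space of linear dependences among the 2n matrices M(g), g ∈ D_n, is one-dimensional, spanned by the relation Σ_k M(r^k) − Σ_k M(f r^k) = 0.) -/

import Mathlib

/-!
Index rows and columns by the ring `ℤ/n`. The rotation `r ^ k` sends `i` to `i + k` and the
reflection `f r ^ k` sends `i` to `-1 - (i + k)`, so each entry `(i, j)` of the combination receives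
exactly one contribution from each family: it equals `λ (r ^ (j - i)) + λ (f r ^ (-1 - j - i))`
(`combination_apply`). For odd `n` the element `2` is invertible, so the exponents
`x = j - i` and `y = -1 - j - i` can be prescribed independently
(`exists_entry_with_exponents`). Hence the combination vanishes iff `λ (r ^ x) = -λ (f r ^ y)`
for all `x` and `y`, that is, iff both families are constant with opposite values.
-/

/-- The permutation matrix of a permutation `g` of `Fin n`. -/
noncomputable def permMatrix (n : ℕ) (g : Equiv.Perm (Fin n)) :
    Matrix (Fin n) (Fin n) ℝ :=
  Matrix.of fun i j => if g i = j then (1 : ℝ) else 0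

open scoped Fin.CommRing

theorem finRotate_pow_apply (m k : ℕ) (i : Fin (m + 1)) :
    (finRotate (m + 1) ^ k) i = i + (k : Fin (m + 1)) := by
  induction k with
  | zero => simp
  | succ k ih =>
    rw [pow_succ', Equiv.Perm.mul_apply, ih, finRotate_apply]
    push_cast
    ring

theorem fin_rev_eq (m : ℕ) (i : Fin (m + 1)) : Fin.rev i = -1 - i := by
  have h : Fin.last m = -1 := by
    rw [eq_neg_iff_add_eq_zero]
    exact Fin.last_add_one m
  rw [← Fin.last_sub, h]

theorem finRotate_pow_val_natCast (m k : ℕ) :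
    finRotate (m + 1) ^ ((k : Fin (m + 1)) : ℕ) = finRotate (m + 1) ^ k := by
  ext i
  rw [finRotate_pow_apply, finRotate_pow_apply, Fin.cast_val_eq_self]

/-- Each entry receives one contribution from the rotations and one from the reflections. -/
theorem combination_apply (m : ℕ) (lam : Equiv.Perm (Fin (m + 1)) → ℝ) (i j : Fin (m + 1)) :
    ((∑ k ∈ Finset.range (m + 1),
        lam ((finRotate (m + 1)) ^ k) • permMatrix (m + 1) ((finRotate (m + 1)) ^ k))
      + (∑ k ∈ Finset.range (m + 1),
          lam (Fin.revPerm * (finRotate (m + 1)) ^ k) •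
            permMatrix (m + 1) (Fin.revPerm * (finRotate (m + 1)) ^ k))) i j
    = lam (finRotate (m + 1) ^ ((j - i : Fin (m + 1)) : ℕ))
      + lam (Fin.revPerm * finRotate (m + 1) ^ ((-1 - j - i : Fin (m + 1)) : ℕ)) := by
  have h1 : ∀ k : Fin (m + 1), i + k = j ↔ k = j - i := fun k => by
    rw [eq_sub_iff_add_eq, add_comm i k]
  have h2 : ∀ k : Fin (m + 1), -1 - (i + k) = j ↔ k = -1 - j - i := fun k =>
    ⟨fun h => by rw [← h]; ring, fun h => by rw [h]; ring⟩
  simp only [Finset.sum_range, Matrix.add_apply, Matrix.sum_apply, Matrix.smul_apply, permMatrix,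
    Matrix.of_apply, Equiv.Perm.mul_apply, Fin.revPerm_apply, finRotate_pow_apply, fin_rev_eq,
    Fin.cast_val_eq_self, h1, h2, smul_eq_mul, mul_ite, mul_one, mul_zero, Finset.sum_ite_eq',
    Finset.mem_univ, if_true]

theorem exists_entry_with_exponents (p : ℕ) (x y : Fin (2 * p + 1)) :
    ∃ i j : Fin (2 * p + 1), j - i = x ∧ -1 - j - i = y := by
  have h0 : 2 * (p : Fin (2 * p + 1)) + 1 = 0 := by
    have h := Fin.natCast_self (2 * p + 1)
    push_cast at h
    exact h
  -- Since `2 * p = -1`, the inverse of `2` is `-p`; solve `2 * j = x - y - 1`.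
  refine ⟨-p * (x - y - 1) - x, -p * (x - y - 1), by ring, ?_⟩
  linear_combination (x - y - 1) * h0

/-- For odd `n > 2`, a real combination `Σ_{g ∈ D_n} λ(g) M(g)` (the rotations are
`r^k = (finRotate n)^k` and the reflections are `f r^k = Fin.revPerm * (finRotate n)^k`,
`0 ≤ k < n`) vanishes iff there is `c ∈ ℝ` with `λ(r^k) = c` and `λ(f r^k) = −c` for all `k`. -/
theorem dihedral_gale_odd (n : ℕ) (hn : 2 < n) (hodd : Odd n)
    (lam : Equiv.Perm (Fin n) → ℝ) :
    (∑ k ∈ Finset.range n,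
        lam ((finRotate n) ^ k) • permMatrix n ((finRotate n) ^ k))
      + (∑ k ∈ Finset.range n,
          lam (Fin.revPerm * (finRotate n) ^ k) •
            permMatrix n (Fin.revPerm * (finRotate n) ^ k)) = 0
    ↔ ∃ c : ℝ,
        (∀ k : ℕ, lam ((finRotate n) ^ k) = c)
        ∧ (∀ k : ℕ, lam (Fin.revPerm * (finRotate n) ^ k) = -c) := by
  obtain ⟨p, rfl⟩ := hodd
  rw [← Matrix.ext_iff]
  simp only [combination_apply, Matrix.zero_apply]
  constructor
  · intro h
    have key : ∀ k l : ℕ, lam (finRotate (2 * p + 1) ^ k)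
        + lam (Fin.revPerm * finRotate (2 * p + 1) ^ l) = 0 := fun k l => by
      obtain ⟨i, j, hx, hy⟩ := exists_entry_with_exponents p k l
      simpa only [hx, hy, finRotate_pow_val_natCast] using h i j
    refine ⟨lam (finRotate (2 * p + 1) ^ 0), fun k => ?_, fun k => ?_⟩
    · linarith [key k 0, key 0 0]
    · linarith [key 0 k]
  · rintro ⟨c, hr, hf⟩ i j
    rw [hr, hf, add_neg_cancel]
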